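/- arXiv:math/0403086 — 7 statements merged into one kernel-verified Lean document; each statement's English description precedes it below -/
import Mathlib

section
/- For every real number u and every real number z with |z| < 1/2, the series Σ_{n≥0} h_{2n}(u) · z^n/n! converges and equals (1 − 2z)^{−1/2} · exp(u²z/(1 − 2z)), where h_m(u) = Σ_{j=0}^{⌊m/2⌋} m!/(2^j j! (m−2j)!) · u^{m−2j}. -/
/-- The renormalized Hermite polynomial
`h_m(u) = ∑_{j=0}^{⌊m/2⌋} m!/(2^j j! (m−2j)!) u^{m−2j}`. -/
noncomputable def hermiteH (m : ℕ) (u : ℝ) : ℝ :=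
  ∑ j ∈ Finset.range (m / 2 + 1),
    (Nat.factorial m : ℝ) /
      (2 ^ j * Nat.factorial j * Nat.factorial (m - 2 * j)) * u ^ (m - 2 * j)

/-- Coefficients of `(1-x)^(-(1/2+k))`. -/
noncomputable def dCoef (k j : ℕ) : ℝ :=
  (Nat.factorial (2 * (k + j)) : ℝ) * Nat.factorial k /
    (Nat.factorial (k + j) * Nat.factorial (2 * k) * 4 ^ j * Nat.factorial j)

theorem dCoef_nonneg (k j : ℕ) : 0 ≤ dCoef k j := by
  unfold dCoef; positivity

theorem dCoef_succ (k j : ℕ) :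
    dCoef k (j + 1) * (j + 1) = dCoef k j * (1 / 2 + k + j) := by
  unfold dCoef
  have e : 2 * (k + (j + 1)) = 2 * (k + j) + 1 + 1 := by ring
  have e' : k + (j + 1) = (k + j) + 1 := by ring
  rw [e, e', Nat.factorial_succ (2 * (k + j) + 1), Nat.factorial_succ (2 * (k + j)),
    Nat.factorial_succ (k + j), Nat.factorial_succ j]
  have h1 : (Nat.factorial (k + j) : ℝ) ≠ 0 := by positivity
  have h2 : (Nat.factorial (2 * k) : ℝ) ≠ 0 := by positivity
  have h3 : (Nat.factorial j : ℝ) ≠ 0 := by positivity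
  have h4 : ((k : ℝ) + j + 1) ≠ 0 := by positivity
  have h5 : ((j : ℝ) + 1) ≠ 0 := by positivity
  push_cast
  field_simp
  ring

theorem dCoef_eq (k j : ℕ) : Ring.choose ((1 / 2 + k : ℝ) + j - 1) j = dCoef k j := by
  rw [← Ring.multichoose_eq]
  have key : ∀ j : ℕ, (ascPochhammer ℝ j).eval (1 / 2 + k : ℝ) = Nat.factorial j * dCoef k j := by
    intro j
    induction j with
    | zero =>
      have h1 : (Nat.factorial k : ℝ) ≠ 0 := by positivity
      have h2 : (Nat.factorial (2 * k) : ℝ) ≠ 0 := by positivity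
      simp [dCoef]
      field_simp
    | succ j ih =>
      rw [ascPochhammer_succ_eval, ih, Nat.factorial_succ]
      push_cast
      linear_combination (-(Nat.factorial j : ℝ)) * dCoef_succ k j
  have h := Ring.factorial_nsmul_multichoose_eq_ascPochhammer (1 / 2 + k : ℝ) j
  rw [Polynomial.ascPochhammer_smeval_eq_eval, key, nsmul_eq_mul] at h
  exact mul_left_cancel₀ (by positivity) h

theorem dCoef_hasSum (k : ℕ) (x : ℝ) (hx : |x| < 1) :
    HasSum (fun j => dCoef k j * x ^ j) ((1 - x) ^ (-(1 / 2 : ℝ)) * (1 / (1 - x)) ^ k) := by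
  have h := (Real.one_div_one_sub_rpow_hasFPowerSeriesOnBall_zero (1 / 2 + k)).hasSum
    (y := x) (by simpa [enorm_eq_nnnorm, ← NNReal.coe_lt_coe] using hx)
  have hp : 0 < 1 - x := by linarith [(abs_lt.1 hx).2]
  convert! h using 1
  · ext j
    rw [← dCoef_eq]
    simp [FormalMultilinearSeries.ofScalars, mul_comm]
  · rw [zero_add, Real.rpow_add hp, Real.rpow_natCast, Real.rpow_neg hp.le, div_pow, one_pow]
    field_simp

/-- The double family. -/
noncomputable def dTerm (u z : ℝ) (p : ℕ × ℕ) : ℝ :=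
  dCoef p.1 p.2 * (2 * z) ^ p.2 * ((u ^ 2 * z) ^ p.1 / Nat.factorial p.1)

theorem dTerm_inner (u z : ℝ) (hz : |z| < 1 / 2) (k : ℕ) :
    HasSum (fun j => dTerm u z (k, j))
      ((1 - 2 * z) ^ (-(1 / 2 : ℝ)) * ((u ^ 2 * z / (1 - 2 * z)) ^ k / Nat.factorial k)) := by
  have h := (dCoef_hasSum k (2 * z) (by rw [abs_mul, abs_two]; linarith)).mul_right
    ((u ^ 2 * z) ^ k / Nat.factorial k)
  convert! h using 1
  rw [div_pow, div_pow, one_pow]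
  ring

theorem dTerm_outer (u z : ℝ) :
    HasSum (fun k : ℕ => (1 - 2 * z) ^ (-(1 / 2 : ℝ)) *
        ((u ^ 2 * z / (1 - 2 * z)) ^ k / Nat.factorial k))
      ((1 - 2 * z) ^ (-(1 / 2 : ℝ)) * Real.exp (u ^ 2 * z / (1 - 2 * z))) := by
  have h := NormedSpace.expSeries_div_hasSum_exp (u ^ 2 * z / (1 - 2 * z))
  rw [← Real.exp_eq_exp_ℝ] at h
  exact h.mul_left _

theorem dTerm_summable (u z : ℝ) (hz : |z| < 1 / 2) : Summable (dTerm u z) := by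
  have hz' : |(|z|)| < 1 / 2 := by rwa [abs_abs]
  have h : Summable (dTerm u |z|) := by
    refine (summable_prod_of_nonneg ?_).2 ⟨fun k => (dTerm_inner u |z| hz' k).summable, ?_⟩
    · intro p
      have := dCoef_nonneg p.1 p.2
      simp only [dTerm, Pi.zero_apply]
      positivity
    · simp_rw [fun k => (dTerm_inner u |z| hz' k).tsum_eq]
      exact (dTerm_outer u |z|).summable
  refine Summable.of_norm_bounded h fun p => le_of_eq ?_
  simp only [dTerm, Real.norm_eq_abs, abs_mul, abs_div, abs_pow, abs_two,
    abs_of_nonneg (dCoef_nonneg _ _), Nat.abs_cast, sq_abs]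

theorem dTerm_hasSum (u z : ℝ) (hz : |z| < 1 / 2) : HasSum (dTerm u z)
    ((1 - 2 * z) ^ (-(1 / 2 : ℝ)) * Real.exp (u ^ 2 * z / (1 - 2 * z))) := by
  have h := (dTerm_summable u z hz).hasSum
  rwa [(h.prod_fiberwise (dTerm_inner u z hz)).unique (dTerm_outer u z)] at h

theorem dTerm_diag (u z : ℝ) (n : ℕ) :
    ∑ p ∈ Finset.HasAntidiagonal.antidiagonal n, dTerm u z p = hermiteH (2 * n) u * z ^ n / Nat.factorial n := by
  rw [← Finset.Nat.sum_antidiagonal_swap, Finset.Nat.sum_antidiagonal_eq_sum_range_succ_mk,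
    hermiteH, Finset.sum_mul, Finset.sum_div]
  rw [Nat.mul_div_cancel_left n two_pos]
  refine Finset.sum_congr rfl fun j hj => ?_
  obtain ⟨k, rfl⟩ := Nat.exists_eq_add_of_le' (Nat.lt_succ_iff.1 (Finset.mem_range.1 hj))
  have e : 2 * (k + j) - 2 * j = 2 * k := by omega
  rw [e]
  simp only [Prod.swap, Nat.add_sub_cancel, dTerm, dCoef]
  have h1 : (Nat.factorial (k + j) : ℝ) ≠ 0 := by positivity
  have h2 : (Nat.factorial (2 * k) : ℝ) ≠ 0 := by positivity
  have h3 : (Nat.factorial j : ℝ) ≠ 0 := by positivity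
  have h4 : (Nat.factorial k : ℝ) ≠ 0 := by positivity
  have h6 : (4 : ℝ) ^ j = 2 ^ j * 2 ^ j := by rw [← mul_pow]; norm_num
  rw [h6, mul_pow, mul_pow, ← pow_mul, pow_add]
  field_simp

/-- Doetsch's identity: the double lacunary generating function for Hermite
polynomials. -/
theorem doetsch (u z : ℝ) (hz : |z| < 1 / 2) :
    HasSum (fun n : ℕ => hermiteH (2 * n) u * z ^ n / Nat.factorial n)
      ((1 - 2 * z) ^ (-(1 / 2 : ℝ)) * Real.exp (u ^ 2 * z / (1 - 2 * z))) := by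
  have h := (Finset.HasAntidiagonal.sigmaAntidiagonalEquivProd (A := ℕ)).hasSum_iff.2
    (dTerm_hasSum u z hz)
  refine h.sigma fun n => ?_
  rw [← dTerm_diag, ← Finset.sum_coe_sort]
  exact hasSum_fintype _
end

section
/- Let L : ℝ[X] → ℝ be the linear functional determined by L(X^n) = (2k)!/(2^k k!) if n = 2k is even, and L(X^n) = 0 if n is odd. Then for every polynomial f ∈ ℝ[X] and every natural number n, L(X^n · f) = Σ_{j,m ≥ 0, 2j + m = n} (n!/(2^j j! m!)) · L(f^{(m)}), where f^{(m)} denotes the m-th derivative of f. -/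
open Polynomial

/-- The moments of the umbra `M`: `M^{2k} = (2k)!/(2^k k!)`, `M^{odd} = 0`. -/
noncomputable def Mmoment (n : ℕ) : ℝ :=
  if n % 2 = 0 then (Nat.factorial n : ℝ) / (2 ^ (n / 2) * Nat.factorial (n / 2))
  else 0

/-- The linear functional `L` on `ℝ[X]` determined by `L(Xⁿ) = Mmoment n`. -/
noncomputable def L (p : Polynomial ℝ) : ℝ := p.sum fun k a => a * Mmoment k

theorem Mmoment_succ_succ (k : ℕ) : Mmoment (k + 2) = (k + 1) * Mmoment k := by
  unfold Mmoment
  have h1 : (k + 2) % 2 = k % 2 := by omega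
  rw [h1]
  split_ifs with h
  · obtain ⟨m, rfl⟩ : ∃ m, k = 2 * m := ⟨k / 2, by omega⟩
    have h2 : (2 * m + 2) / 2 = m + 1 := by omega
    have h3 : 2 * m / 2 = m := by omega
    rw [h2, h3, Nat.factorial_succ (2 * m + 1), Nat.factorial_succ (2 * m), Nat.factorial_succ m]
    have := Nat.factorial_ne_zero m
    push_cast
    field_simp
    ring
  · simp

theorem L_add (p q : Polynomial ℝ) : L (p + q) = L p + L q := by
  unfold L
  exact Polynomial.sum_add_index p q _ (by simp) (by intros; ring)

theorem L_monomial (k : ℕ) (a : ℝ) : L (monomial k a) = a * Mmoment k := by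
  unfold L
  exact Polynomial.sum_monomial_index a _ (by simp)

theorem L_C_mul (c : ℝ) (p : Polynomial ℝ) : L (C c * p) = c * L p := by
  induction p using Polynomial.induction_on' with
  | add p q hp hq => rw [mul_add, L_add, L_add, hp, hq, mul_add]
  | monomial k a => rw [C_mul_monomial, L_monomial, L_monomial, mul_assoc]

theorem L_X_mul (p : Polynomial ℝ) : L (X * p) = L (derivative p) := by
  induction p using Polynomial.induction_on' with
  | add p q hp hq => rw [mul_add, L_add, derivative_add, L_add, hp, hq]
  | monomial k a =>
    rw [X_mul_monomial, derivative_monomial, L_monomial, L_monomial]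
    rcases k with _ | k
    · simp [Mmoment]
    · rw [Mmoment_succ_succ]
      rw [Nat.add_sub_cancel]
      push_cast
      ring

theorem L_rec (f : Polynomial ℝ) (n : ℕ) :
    L (X ^ (n + 2) * f) = L (X ^ (n + 1) * derivative f) + (n + 1) * L (X ^ n * f) := by
  have h : X ^ (n + 2) * f = X * (X ^ (n + 1) * f) := by ring
  rw [h, L_X_mul, ← L_C_mul, ← L_add, derivative_mul, derivative_X_pow]
  congr 1
  simp
  ring

/-- The coefficients. -/
noncomputable def cf (n j : ℕ) : ℝ := (n.choose (2 * j) : ℝ) * Mmoment (2 * j)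

theorem cf_zero (n : ℕ) : cf n 0 = 1 := by simp [cf, Mmoment]

theorem cf_rec (n j : ℕ) : cf (n + 2) (j + 1) = cf (n + 1) (j + 1) + (n + 1) * cf n j := by
  unfold cf
  have h : 2 * (j + 1) = 2 * j + 1 + 1 := by ring
  rw [h, Nat.choose_succ_succ (n + 1) (2 * j + 1), Mmoment_succ_succ]
  have h2 := Nat.add_one_mul_choose_eq n (2 * j)
  have h3 : ((n : ℝ) + 1) * (n.choose (2 * j)) = ((n + 1).choose (2 * j + 1)) * (2 * j + 1) := by
    exact_mod_cast h2
  push_cast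
  simp only [Nat.succ_eq_add_one]
  linear_combination (-Mmoment (2 * j)) * h3

theorem cf_eq_zero (n j : ℕ) (h : n < 2 * j) : cf n j = 0 := by
  simp [cf, Nat.choose_eq_zero_of_lt h]

theorem cf_eq (n j : ℕ) (h : 2 * j ≤ n) : cf n j =
    (Nat.factorial n : ℝ) / (2 ^ j * Nat.factorial j * Nat.factorial (n - 2 * j)) := by
  have h3 : 2 * j / 2 = j := by omega
  have h4 : 2 * j % 2 = 0 := by omega
  rw [cf, Nat.cast_choose ℝ h, Mmoment, if_pos h4, h3]
  have := Nat.factorial_ne_zero j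
  have := Nat.factorial_ne_zero (2 * j)
  have := Nat.factorial_ne_zero (n - 2 * j)
  field_simp

theorem shift_aux (n : ℕ) : ∀ (f : Polynomial ℝ) (N : ℕ), n < 2 * N →
    L (X ^ n * f) = ∑ j ∈ Finset.range N, cf n j * L (derivative^[n - 2 * j] f) := by
  induction n using Nat.strong_induction_on with
  | _ n ih =>
    intro f N hN
    obtain ⟨N, rfl⟩ : ∃ M, N = M + 1 := ⟨N - 1, by omega⟩
    rw [Finset.sum_range_succ', cf_zero]
    rcases n with _ | _ | n
    · rw [Finset.sum_eq_zero]
      · simp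
      · intro j _
        rw [cf_eq_zero _ _ (by omega), zero_mul]
    · rw [Finset.sum_eq_zero]
      · simp [L_X_mul]
      · intro j _
        rw [cf_eq_zero _ _ (by omega), zero_mul]
    · rw [L_rec, ih (n + 1) (by omega) (derivative f) (N + 1) (by omega),
        ih n (by omega) f N (by omega), Finset.sum_range_succ', cf_zero, Finset.mul_sum,
        add_right_comm, ← Finset.sum_add_distrib]
      congr 1
      apply Finset.sum_congr rfl
      intro j _
      rw [cf_rec]
      have e : n + 1 + 1 - 2 * (j + 1) = n - 2 * j := by omega
      rw [e]
      by_cases hj : n + 1 < 2 * (j + 1)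
      · rw [cf_eq_zero _ _ hj]
        ring
      · have e2 : n - 2 * j = (n + 1 - 2 * (j + 1)) + 1 := by omega
        rw [e2, Function.iterate_succ_apply]
        ring

/-- The coefficient-of-`zⁿ/n!` form of the umbral identity
`e^{Mz} f(M) = e^{z²/2} f(M+z)`. -/
theorem umbral_shift (f : Polynomial ℝ) (n : ℕ) :
    L (X ^ n * f) =
      ∑ j ∈ Finset.range (n / 2 + 1),
        (Nat.factorial n : ℝ) /
            (2 ^ j * Nat.factorial j * Nat.factorial (n - 2 * j)) *
          L (Polynomial.derivative^[n - 2 * j] f) := by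
  rw [shift_aux n f (n / 2 + 1) (by omega)]
  apply Finset.sum_congr rfl
  intro j hj
  rw [Finset.mem_range] at hj
  rw [cf_eq n j (by omega)]
end

section
/- Let L : ℝ[X] → ℝ be the linear functional determined by L(X^n) = (2k)!/(2^k k!) if n = 2k is even, and L(X^n) = 0 if n is odd. Then for every polynomial f = Σ_k a_k X^k ∈ ℝ[X] and every real number z with |z| < 1/2, the series Σ_{n≥0} L(X^{2n} · f) · z^n/n! converges and equals (1 − 2z)^{−1/2} · Σ_k a_k · L(X^k) · (1 − 2z)^{−k/2}. -/
open Polynomial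

theorem Mmoment_add_two (n : ℕ) : Mmoment (n + 2) = (n + 1) * Mmoment n := by
  unfold Mmoment
  rw [Nat.add_mod_right, Nat.add_div_right n (by norm_num : 0 < 2)]
  split_ifs with h
  · obtain ⟨m, rfl⟩ : ∃ m, n = 2 * m := ⟨n / 2, by omega⟩
    rw [Nat.mul_div_cancel_left m (by norm_num : 0 < 2)]
    simp only [Nat.factorial_succ, pow_succ]
    push_cast
    have : (m.factorial : ℝ) ≠ 0 := by positivity
    have : (m : ℝ) + 1 ≠ 0 := by positivity
    field_simp
    ring
  · simp

theorem Mmoment_shift (k n : ℕ) : Mmoment (2 * n + k) =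
    2 ^ n * (n.factorial * Ring.choose (((k : ℝ) + 1) / 2 + n - 1) n) * Mmoment k := by
  have key : ∀ n : ℕ, (n.factorial : ℝ) * Ring.choose (((k : ℝ) + 1) / 2 + n - 1) n
      = (ascPochhammer ℝ n).eval (((k : ℝ) + 1) / 2) := by
    intro n
    rw [← Ring.multichoose_eq, ← nsmul_eq_mul,
      Ring.factorial_nsmul_multichoose_eq_ascPochhammer, Polynomial.ascPochhammer_smeval_eq_eval]
  rw [key]
  induction n with
  | zero => simp
  | succ n ih =>
    rw [show 2 * (n + 1) + k = (2 * n + k) + 2 by ring, Mmoment_add_two, ih,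
      ascPochhammer_succ_eval]
    push_cast
    ring

theorem L_shift (m : ℕ) (f : Polynomial ℝ) :
    L (X ^ m * f) = f.sum fun k a => a * Mmoment (m + k) := by
  induction f using Polynomial.induction_on' with
  | add p q hp hq =>
    rw [mul_add, L_add, hp, hq, Polynomial.sum_add_index p q _ (by simp) (by intros; ring)]
  | monomial k a =>
    rw [Polynomial.sum_monomial_index _ _ (by ring), X_pow_mul, monomial_mul_X_pow, L_monomial,
      add_comm]

/-- The analytic form of the umbral identity
`e^{M²z} f(M) = (1 − 2z)^{−1/2} f(M/√(1−2z))`. -/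
theorem umbral_msq (f : Polynomial ℝ) (z : ℝ) (hz : |z| < 1 / 2) :
    HasSum (fun n : ℕ => L (X ^ (2 * n) * f) * z ^ n / Nat.factorial n)
      ((1 - 2 * z) ^ (-(1 / 2 : ℝ)) *
        ∑ k ∈ f.support, f.coeff k * L (X ^ k) * (1 - 2 * z) ^ (-(k : ℝ) / 2)) := by
  have hz' : |2 * z| < 1 := by
    rw [abs_mul, abs_two]; linarith
  have hpos : 0 < 1 - 2 * z := by
    have := (abs_lt.mp hz).2
    linarith
  have hk : ∀ k : ℕ, HasSum (fun n : ℕ => Mmoment (2 * n + k) * z ^ n / Nat.factorial n)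
      ((1 - 2 * z) ^ (-(1 / 2 : ℝ)) * (Mmoment k * (1 - 2 * z) ^ (-(k : ℝ) / 2))) := by
    intro k
    have hball : 2 * z ∈ Metric.eball (0 : ℝ) 1 := by
      rw [Metric.mem_eball, edist_dist, Real.dist_eq, sub_zero]
      exact ENNReal.ofReal_lt_one.mpr hz'
    have h := (Real.one_div_one_sub_rpow_hasFPowerSeriesOnBall_zero
      (((k : ℝ) + 1) / 2)).hasSum (y := 2 * z) hball
    have h2 := h.mul_left (Mmoment k)
    convert! h2 using 1
    · funext n
      have : (n.factorial : ℝ) ≠ 0 := by positivity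
      rw [Mmoment_shift]
      simp [mul_pow]
      field_simp
    · rw [zero_add, mul_left_comm, ← Real.rpow_add hpos, one_div ((1 - 2 * z) ^ _), ← Real.rpow_neg hpos.le]
      congr 2
      ring
  have hX : ∀ k : ℕ, L (X ^ k) = Mmoment k := by
    intro k
    rw [X_pow_eq_monomial, L_monomial, one_mul]
  have hs := hasSum_sum (s := f.support) fun k _ => (hk k).mul_left (f.coeff k)
  convert! hs using 1
  · funext n
    rw [L_shift, Polynomial.sum_def, Finset.sum_mul, Finset.sum_div]
    refine Finset.sum_congr rfl fun k _ => ?_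
    ring
  · rw [Finset.mul_sum]
    refine Finset.sum_congr rfl fun k _ => ?_
    rw [hX]
    ring
end

section
/- For every real number x with 0 < |x| < 1/4, the series Σ_{n≥0} C_n · x^n converges and equals (1 − √(1 − 4x))/(2x), where C_n is the n-th Catalan number. -/
theorem catalan_partial_sum (N : ℕ) :
    ∑ n ∈ Finset.range N, (catalan n : ℝ) * (1 / 4) ^ n
      = 2 * (1 - (N.centralBinom : ℝ) * (1 / 4) ^ N) := by
  induction N with
  | zero => simp
  | succ n ih =>
    rw [Finset.sum_range_succ, ih]
    have h1 : ((n : ℝ) + 1) * catalan n = n.centralBinom := by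
      exact_mod_cast succ_mul_catalan_eq_centralBinom n
    have h2 : ((n : ℝ) + 1) * (n + 1).centralBinom = 2 * (2 * n + 1) * n.centralBinom := by
      exact_mod_cast Nat.succ_mul_centralBinom_succ n
    have h3 : ((n + 1).centralBinom : ℝ) = 2 * (2 * n + 1) * catalan n := by
      have h0 : (n : ℝ) + 1 ≠ 0 := by positivity
      apply mul_left_cancel₀ h0
      rw [h2, ← h1]; ring
    rw [h3, ← h1, pow_succ]
    ring

theorem catalan_quarter_summable :
    Summable (fun n : ℕ => (catalan n : ℝ) * (1 / 4) ^ n) := by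
  refine summable_of_sum_range_le (c := 2) (fun n => by positivity) (fun N => ?_)
  rw [catalan_partial_sum]
  have : 0 ≤ (N.centralBinom : ℝ) * (1 / 4) ^ N := by positivity
  linarith

theorem catalan_quarter_tsum_le :
    ∑' n : ℕ, (catalan n : ℝ) * (1 / 4) ^ n ≤ 2 := by
  refine Real.tsum_le_of_sum_range_le (fun n => by positivity) (fun N => ?_)
  rw [catalan_partial_sum]
  have : 0 ≤ (N.centralBinom : ℝ) * (1 / 4) ^ N := by positivity
  linarith

/-- The Catalan number generating function: for `0 < |x| < 1/4`,
`∑_n C_n xⁿ = (1 − √(1 − 4x))/(2x)`. -/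
theorem catalan_gf (x : ℝ) (hx0 : 0 < |x|) (hx : |x| < 1 / 4) :
    HasSum (fun n : ℕ => (catalan n : ℝ) * x ^ n)
      ((1 - Real.sqrt (1 - 4 * x)) / (2 * x)) := by
  have hle : ∀ n : ℕ, ‖(catalan n : ℝ) * x ^ n‖ ≤ (catalan n : ℝ) * (1 / 4) ^ n := by
    intro n
    rw [norm_mul, norm_pow, Real.norm_eq_abs, Real.norm_eq_abs, Nat.abs_cast]
    gcongr
  have hn : Summable (fun n : ℕ => ‖(catalan n : ℝ) * x ^ n‖) :=
    Summable.of_nonneg_of_le (fun n => norm_nonneg _) hle catalan_quarter_summable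
  have hs : Summable (fun n : ℕ => (catalan n : ℝ) * x ^ n) := hn.of_norm
  have hb : ‖∑' n : ℕ, (catalan n : ℝ) * x ^ n‖ ≤ 2 :=
    (tsum_of_norm_bounded catalan_quarter_summable.hasSum hle).trans catalan_quarter_tsum_le
  have hsq : (∑' n : ℕ, (catalan n : ℝ) * x ^ n) =
      1 + x * ((∑' n : ℕ, (catalan n : ℝ) * x ^ n) * ∑' n : ℕ, (catalan n : ℝ) * x ^ n) := by
    rw [tsum_mul_tsum_eq_tsum_sum_antidiagonal_of_summable_norm hn hn, ← tsum_mul_left,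
      hs.tsum_eq_zero_add]
    congr 1
    · simp
    · refine tsum_congr fun n => ?_
      rw [catalan_succ', Nat.cast_sum, Finset.sum_mul, Finset.mul_sum]
      refine Finset.sum_congr rfl fun p hp => ?_
      rw [← Finset.HasAntidiagonal.mem_antidiagonal.mp hp]
      push_cast
      ring
  have hS := hs.hasSum
  set S := ∑' n : ℕ, (catalan n : ℝ) * x ^ n with hSdef
  clear_value S
  have hxne : x ≠ 0 := abs_pos.mp hx0
  have hxS : x * S ≤ 1 / 2 := by
    calc x * S ≤ |x * S| := le_abs_self _
      _ = |x| * |S| := abs_mul _ _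
      _ ≤ 1 / 4 * 2 := mul_le_mul hx.le hb (abs_nonneg _) (by norm_num)
      _ = 1 / 2 := by norm_num
  have hsqrt : Real.sqrt (1 - 4 * x) = 1 - 2 * x * S := by
    have h : 1 - 4 * x = (1 - 2 * x * S) ^ 2 := by linear_combination (4 * x) * hsq
    rw [h, Real.sqrt_sq (by linarith)]
  have hval : (1 - Real.sqrt (1 - 4 * x)) / (2 * x) = S := by
    rw [hsqrt]; field_simp; ring
  rw [hval]
  exact hS
end

section
/- Let u and z be real numbers with z ≠ 0 and |12uz| < 1. Then the series Σ_{n≥1} 3^n · ((2n)!/((n+2)!·n!)) · u^{n+2} · z^n converges and equals ((1 − 12uz)^{3/2} − 1)/(108z²) + u/(6z) − u²/2. -/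
lemma choose_three_halves_rec (n : ℕ) :
    Ring.choose (3 / 2 : ℝ) (n + 1) * ((n : ℝ) + 1) = Ring.choose (3 / 2 : ℝ) n * (3 / 2 - n) := by
  have h1 := Ring.descPochhammer_eq_factorial_smul_choose (3 / 2 : ℝ) (n + 1)
  have h0 := Ring.descPochhammer_eq_factorial_smul_choose (3 / 2 : ℝ) n
  rw [descPochhammer_succ_right, Polynomial.smeval_mul, h0] at h1
  simp only [nsmul_eq_mul, Nat.factorial_succ, Polynomial.smeval_sub, Polynomial.smeval_X,
    Polynomial.smeval_natCast, pow_one, pow_zero, mul_one] at h1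
  push_cast at h1
  have hf : (n.factorial : ℝ) ≠ 0 := by positivity
  apply mul_left_cancel₀ hf
  linear_combination -h1

lemma tree_coeff (n : ℕ) :
    Ring.choose (3 / 2 : ℝ) (n + 2) * (-12) ^ (n + 2) =
      108 * (3 ^ n * ((Nat.factorial (2 * n) : ℝ) /
        (Nat.factorial (n + 2) * Nat.factorial n))) := by
  induction n with
  | zero =>
    have h0 := choose_three_halves_rec 0
    have h1 := choose_three_halves_rec 1
    simp only [Ring.choose_zero_right] at h0
    norm_num at h0 h1 ⊢
    rw [show Ring.choose (3 / 2 : ℝ) 2 = 3 / 8 by linarith]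
    norm_num
  | succ n ih =>
    have h := choose_three_halves_rec (n + 2)
    push_cast at h
    have e : Ring.choose (3 / 2 : ℝ) (n + 1 + 2) =
        Ring.choose (3 / 2 : ℝ) (n + 2) * (3 / 2 - (n + 2)) / (n + 3) := by
      rw [eq_div_iff (by positivity)]
      rw [show n + 1 + 2 = n + 2 + 1 by ring]
      linear_combination h
    have e2 : Ring.choose (3 / 2 : ℝ) (n + 1 + 2) * (-12) ^ (n + 1 + 2) =
        (Ring.choose (3 / 2 : ℝ) (n + 2) * (-12) ^ (n + 2)) * (6 * (2 * n + 1) / (n + 3)) := by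
      rw [e]; field_simp; ring
    rw [e2, ih, show 2 * (n + 1) = 2 * n + 1 + 1 by ring, show n + 1 + 2 = n + 2 + 1 by ring,
      Nat.factorial_succ (2 * n + 1), Nat.factorial_succ (2 * n), Nat.factorial_succ (n + 2),
      Nat.factorial_succ n]
    push_cast
    have a : (n.factorial : ℝ) ≠ 0 := by positivity
    have b : ((n + 2).factorial : ℝ) ≠ 0 := by positivity
    field_simp
    ring


/-- The generating function for unrooted trees with trivalent labeled internal
vertices and leaves weighted `u`:
`∑_{n≥1} 3ⁿ (2n)!/((n+2)! n!) u^{n+2} zⁿ = ((1−12uz)^{3/2} − 1)/(108z²) + u/(6z) − u²/2`. -/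
theorem tree_gf (u z : ℝ) (hz : z ≠ 0) (h : |12 * u * z| < 1) :
    HasSum (fun n : ℕ =>
        (3 : ℝ) ^ (n + 1) *
          ((Nat.factorial (2 * (n + 1)) : ℝ) /
            (Nat.factorial (n + 1 + 2) * Nat.factorial (n + 1))) *
          u ^ (n + 1 + 2) * z ^ (n + 1))
      (((1 - 12 * u * z) ^ ((3 : ℝ) / 2) - 1) / (108 * z ^ 2) + u / (6 * z) -
        u ^ 2 / 2) := by

  have hb := (Real.one_add_rpow_hasFPowerSeriesOnBall_zero (a := 3 / 2)).hasSum
    (y := -(12 * u * z)) (by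
      rw [Metric.mem_eball, edist_dist, Real.dist_eq, ENNReal.ofReal_lt_one, sub_zero, abs_neg]
      exact h)
  simp only [binomialSeries_apply, List.ofFn_const, List.prod_replicate, smul_eq_mul,
    zero_add] at hb
  rw [← hasSum_nat_add_iff' 3] at hb
  have hc := hb.div_const (108 * z ^ 2)
  have c1 : Ring.choose (3 / 2 : ℝ) 1 = 3 / 2 := by
    have h0 := choose_three_halves_rec 0
    simp only [Ring.choose_zero_right] at h0
    norm_num at h0 ⊢
  have c2 : Ring.choose (3 / 2 : ℝ) 2 = 3 / 8 := by
    have h1 := choose_three_halves_rec 1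
    norm_num [c1] at h1
    linarith
  convert hc using 1
  · ext x y; rfl
  · ext n
    have t := tree_coeff (n + 1)
    rw [show n + 3 = n + 1 + 2 by ring,
      show -(12 * u * z) = (-12) * (u * z) by ring, mul_pow (-12 : ℝ), ← mul_assoc, t]
    field_simp
    ring
  · simp only [Finset.sum_range_succ, Finset.sum_range_zero, Ring.choose_zero_right, c1, c2]
    rw [← sub_eq_add_neg]
    field_simp
    ring
end

section
/- Let n and k be natural numbers with 2k ≤ n. The number of involutions σ of a set with n elements (i.e., permutations σ with σ∘σ = identity) having exactly n − 2k fixed points equals n!/(2^k · k! · (n−2k)!). -/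
/-- An involution has exactly `n - 2k` fixed points iff its cycle type is `k` copies of `2`. -/
theorem involution_iff_cycleType (n k : ℕ) (h : 2 * k ≤ n) (σ : Equiv.Perm (Fin n)) :
    (σ * σ = 1 ∧ (Finset.univ.filter fun x => σ x = x).card = n - 2 * k) ↔
      σ.cycleType = Multiset.replicate k 2 := by
  have hfix : (Finset.univ.filter fun x => σ x = x).card + σ.support.card = n := by
    have := Finset.card_filter_add_card_filter_not (s := (Finset.univ : Finset (Fin n)))
      (fun x => σ x = x)
    simpa [Equiv.Perm.support] using this
  rw [← σ.sum_cycleType] at hfix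
  constructor
  · rintro ⟨h1, h2⟩
    rw [← pow_two] at h1
    have h3 := Equiv.Perm.cycleType_of_pow_prime_eq_one (p := 2) h1
    rw [h3] at hfix ⊢
    simp only [Multiset.sum_replicate, smul_eq_mul] at hfix
    congr 1
    omega
  · intro hc
    rw [hc] at hfix
    simp only [Multiset.sum_replicate, smul_eq_mul] at hfix
    refine ⟨?_, by omega⟩
    rw [← pow_two, ← orderOf_dvd_iff_pow_eq_one, ← Equiv.Perm.lcm_cycleType, hc,
      Multiset.lcm_dvd]
    intro b hb
    rw [Multiset.eq_of_mem_replicate hb]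

/-- The number of involutions of an `n`-element set with exactly `n − 2k`
fixed points is `n!/(2^k k! (n−2k)!)`. -/
theorem card_involutions (n k : ℕ) (h : 2 * k ≤ n) :
    (Finset.univ.filter fun σ : Equiv.Perm (Fin n) =>
        σ * σ = 1 ∧ (Finset.univ.filter fun x => σ x = x).card = n - 2 * k).card =
      Nat.factorial n / (2 ^ k * Nat.factorial k * Nat.factorial (n - 2 * k)) := by
  rw [Finset.filter_congr (fun σ _ => involution_iff_cycleType n k h σ),
    Equiv.Perm.card_of_cycleType, if_pos]
  · have hp : ∏ m ∈ (Multiset.replicate k 2).toFinset,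
        ((Multiset.replicate k 2).count m).factorial = k.factorial := by
      rcases Nat.eq_zero_or_pos k with rfl | hk
      · simp
      · rw [Multiset.toFinset_replicate, if_neg hk.ne']
        simp
    rw [hp, Multiset.sum_replicate, Multiset.prod_replicate, Fintype.card_fin, smul_eq_mul,
      mul_comm k 2]
    congr 1
    ring
  · refine ⟨by simp; omega, fun a ha => ?_⟩
    rw [Multiset.eq_of_mem_replicate ha]
end

section
/- For every natural number n and every complex number u, Σ_{j=0}^{⌊n/2⌋} n!/(2^j j! (n−2j)!) · u^{n−2j} = (−i)^n · He_n(i·u), where He_n is the n-th probabilists' Hermite polynomial (Mathlib's Polynomial.hermite n, with coefficients viewed in ℂ) and i = √(−1). -/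
theorem two_mul_factorial_aux (j : ℕ) :
    Nat.factorial (2 * j) = 2 ^ j * Nat.factorial j * Nat.doubleFactorial (2 * j - 1) := by
  rcases j with _ | j
  · simp
  · rw [← Nat.doubleFactorial_two_mul]
    exact Nat.factorial_eq_mul_doubleFactorial (2 * j + 1)

theorem hermite_term_aux (j k : ℕ) (u : ℂ) :
    (Nat.factorial (2 * j + k) : ℂ) / (2 ^ j * Nat.factorial j * Nat.factorial k) * u ^ k =
      (-Complex.I) ^ (2 * j + k) *
        (((Polynomial.hermite (2 * j + k)).coeff k : ℂ) * (Complex.I * u) ^ k) := by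
  rw [Polynomial.coeff_hermite_explicit]
  have h1 : (Nat.factorial (2 * j + k) : ℂ) =
      Nat.choose (2 * j + k) k * Nat.factorial k *
        (2 ^ j * Nat.factorial j * Nat.doubleFactorial (2 * j - 1)) := by
    have h := Nat.choose_mul_factorial_mul_factorial (Nat.le_add_left k (2 * j))
    rw [Nat.add_sub_cancel, two_mul_factorial_aux] at h
    exact_mod_cast h.symm
  have h2 : (-Complex.I) ^ (2 * j + k) * (Complex.I * u) ^ k * (-1) ^ j = u ^ k := by
    have e1 : (-Complex.I) ^ 2 = -1 := by simp
    have e2 : (-Complex.I) ^ k * (Complex.I * u) ^ k = u ^ k := by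
      rw [← mul_pow, ← mul_assoc]; simp
    have e3 : ((-1 : ℂ) ^ j) * (-1) ^ j = 1 := by rw [← mul_pow]; simp
    rw [pow_add, pow_mul, e1]
    linear_combination (((-1 : ℂ) ^ j) * (-1) ^ j) * e2 + u ^ k * e3
  have hk : (Nat.factorial k : ℂ) ≠ 0 := by exact_mod_cast Nat.factorial_ne_zero k
  have hj : (Nat.factorial j : ℂ) ≠ 0 := by exact_mod_cast Nat.factorial_ne_zero j
  push_cast
  rw [h1]
  nth_rewrite 1 [← h2]
  field_simp

open Polynomial in
/-- The renormalized Hermite polynomial `h_n(u)` equals `(−i)ⁿ Heₙ(iu)`, where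
`Heₙ` is the probabilists' Hermite polynomial. -/
theorem hermiteH_eq_hermite (n : ℕ) (u : ℂ) :
    ∑ j ∈ Finset.range (n / 2 + 1),
        (Nat.factorial n : ℂ) /
            (2 ^ j * Nat.factorial j * Nat.factorial (n - 2 * j)) *
          u ^ (n - 2 * j) =
      (-Complex.I) ^ n * Polynomial.aeval (Complex.I * u) (Polynomial.hermite n) := by
  rw [Polynomial.aeval_eq_sum_range, Polynomial.natDegree_hermite, Finset.mul_sum]
  refine Finset.sum_of_injOn (fun j => n - 2 * j) ?_ ?_ ?_ ?_
  · intro a ha b hb hab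
    simp only [Finset.coe_range, Set.mem_Iio] at ha hb hab
    omega
  · intro a ha
    simp only [Finset.coe_range, Set.mem_Iio] at ha ⊢
    omega
  · intro k hk hk'
    have : Odd (n + k) := by
      rw [← Nat.not_even_iff_odd]
      rintro ⟨m, hm⟩
      apply hk'
      simp only [Finset.mem_range] at hk
      refine ⟨n - m, ?_, ?_⟩
      · simp only [Finset.coe_range, Set.mem_Iio]
        omega
      · simp only
        omega
    rw [Polynomial.coeff_hermite_of_odd_add this]
    simp
  · intro j hj
    simp only [Finset.mem_range] at hj
    obtain ⟨k, rfl⟩ : ∃ k, n = 2 * j + k := ⟨n - 2 * j, by omega⟩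
    simp only [Nat.add_sub_cancel_left, zsmul_eq_mul]
    exact hermite_term_aux j k u
end
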